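/- Let S and T be Douthett's parsimonious relations P_{1,0} and P_{2,0} on the 28-element set H of major, minor, and augmented triads. The submonoid M_ST of the monoid of binary relations on H generated by {S, T} contains exactly 8 elements. -/

import Mathlib

/-- The 28-element set of the 24 major and minor triads and the 4 augmented triads:
`Sum.inl n` is the major triad `n_M`, `Sum.inr (Sum.inl n)` is the minor triad `n_m`,
and `Sum.inr (Sum.inr k)` is the augmented triad `k_aug`. -/
abbrev Htriads : Type := (ZMod 12) ⊕ (ZMod 12) ⊕ (ZMod 4)

/-- Binary relations on `Htriads`. -/
abbrev MRel : Type := Htriads → Htriads → Prop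

/-- The monoid of binary relations on `Htriads`: `r * s` relates `x` to `z` iff there is `y`
with `x r y` and `y s z` (i.e. first apply `r`, then `s`), and `1` is the equality relation. -/
instance : Monoid MRel where
  one := fun x y => x = y
  mul := fun r s => fun x z => ∃ y, r x y ∧ s y z
  mul_assoc r s t := by
    funext x z
    apply propext
    constructor
    · rintro ⟨y, ⟨w, hw1, hw2⟩, hy⟩
      exact ⟨w, hw1, y, hw2, hy⟩
    · rintro ⟨w, hw1, y, hy1, hy2⟩
      exact ⟨y, ⟨w, hw1, hy1⟩, hy2⟩
  one_mul r := by
    funext x z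
    apply propext
    constructor
    · rintro ⟨y, rfl, h⟩
      exact h
    · intro h
      exact ⟨x, rfl, h⟩
  mul_one r := by
    funext x z
    apply propext
    constructor
    · rintro ⟨y, h, rfl⟩
      exact h
    · intro h
      exact ⟨z, h, rfl⟩

/-- The major triad on root `n`. -/
def maj (n : ZMod 12) : Htriads := Sum.inl n
/-- The minor triad on root `n`. -/
def mino (n : ZMod 12) : Htriads := Sum.inr (Sum.inl n)
/-- The augmented triad `k_aug`, `k ∈ ℤ/4`. -/
def aug (k : ZMod 4) : Htriads := Sum.inr (Sum.inr k)

/-- Reduction mod 4 of a pitch class mod 12. -/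
def m4 (n : ZMod 12) : ZMod 4 := ZMod.castHom (show (4:ℕ) ∣ 12 by norm_num) (ZMod 4) n

/-- The relation `𝒰`: the symmetric relation relating exactly `n_M` with `(n mod 4)_aug`
and `n_m` with `((n+3) mod 4)_aug`. -/
def Urel : MRel := fun x y =>
  (∃ n : ZMod 12, x = maj n ∧ y = aug (m4 n)) ∨
  (∃ n : ZMod 12, x = aug (m4 n) ∧ y = maj n) ∨
  (∃ n : ZMod 12, x = mino n ∧ y = aug (m4 (n + 3))) ∨
  (∃ n : ZMod 12, x = aug (m4 (n + 3)) ∧ y = mino n)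

/-- The relation `𝒫`: the symmetric relation relating exactly `n_M` with `n_m`,
and each augmented triad with itself. -/
def Prel : MRel := fun x y =>
  (∃ n : ZMod 12, x = maj n ∧ y = mino n) ∨
  (∃ n : ZMod 12, x = mino n ∧ y = maj n) ∨
  (∃ k : ZMod 4, x = aug k ∧ y = aug k)

/-- The relation `ℒ`: the symmetric relation relating exactly `n_M` with `(n+4)_m`,
and each augmented triad with itself. -/
def Lrel : MRel := fun x y =>
  (∃ n : ZMod 12, x = maj n ∧ y = mino (n + 4)) ∨
  (∃ n : ZMod 12, x = mino (n + 4) ∧ y = maj n) ∨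
  (∃ k : ZMod 4, x = aug k ∧ y = aug k)

/-- Douthett's parsimonious relation `𝒮 = P_{1,0}` on major, minor and augmented triads. -/
def Srel : MRel := fun x y =>
  (∃ n : ZMod 12, x = maj n ∧ y = mino n) ∨
  (∃ n : ZMod 12, x = mino n ∧ y = maj n) ∨
  (∃ n : ZMod 12, x = maj n ∧ y = mino (n + 4)) ∨
  (∃ n : ZMod 12, x = mino (n + 4) ∧ y = maj n) ∨
  (∃ n : ZMod 12, x = maj n ∧ y = aug (m4 n)) ∨
  (∃ n : ZMod 12, x = aug (m4 n) ∧ y = maj n) ∨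
  (∃ n : ZMod 12, x = mino n ∧ y = aug (m4 (n + 3))) ∨
  (∃ n : ZMod 12, x = aug (m4 (n + 3)) ∧ y = mino n)

/-- Douthett's parsimonious relation `𝒯 = P_{2,0}` on major, minor and augmented triads. -/
def Trel : MRel := fun x y =>
  (∃ n : ZMod 12, x = maj n ∧ y = maj (n + 4)) ∨
  (∃ n : ZMod 12, x = maj n ∧ y = maj (n + 8)) ∨
  (∃ n : ZMod 12, x = maj n ∧ y = mino (n + 1)) ∨
  (∃ n : ZMod 12, x = mino (n + 1) ∧ y = maj n) ∨
  (∃ n : ZMod 12, x = maj n ∧ y = mino (n + 5)) ∨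
  (∃ n : ZMod 12, x = mino (n + 5) ∧ y = maj n) ∨
  (∃ n : ZMod 12, x = maj n ∧ y = aug (m4 (n + 3))) ∨
  (∃ n : ZMod 12, x = aug (m4 (n + 3)) ∧ y = maj n) ∨
  (∃ n : ZMod 12, x = mino n ∧ y = mino (n + 4)) ∨
  (∃ n : ZMod 12, x = mino n ∧ y = mino (n + 8)) ∨
  (∃ n : ZMod 12, x = mino n ∧ y = aug (m4 n)) ∨
  (∃ n : ZMod 12, x = aug (m4 n) ∧ y = mino n)

/-!
The sum of the pitch classes of a triad maps `Htriads` onto `ℤ/12`. A move of `S` changes it by one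
step `±1`, and a move of `T`, in which two voices move by a semitone each, by a sum of two such
steps. A product of two generators is saturated for this map: it relates *all* pairs of triads
whose sums differ by an admissible amount. Hence `S T = T S = S³` and `T² = S⁴`, so the monoid
consists of `T` and the powers of `S`. For `k ≥ 2` the power `S ^ k` is determined by the `k`-fold
sumset of `{1, -1}` in `ℤ/12`. These sumsets are distinct for `k ≤ 6`, but all odd classes are
reached after five steps as well as after seven, so that `S⁷ = S⁵`.
-/

open scoped Pointwise Finset

section Monoid

variable {M : Type*} [Monoid M] {s t : M}

theorem coe_closure_pair_eq_insert_powers (hst : s * t ∈ Submonoid.powers s)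
    (hts : t * s ∈ Submonoid.powers s) (htt : t * t ∈ Submonoid.powers s) :
    (Submonoid.closure {s, t} : Set M) = insert t (Submonoid.powers s : Set M) := by
  have hs : s ∈ Submonoid.powers s := Submonoid.mem_powers s
  apply Set.Subset.antisymm
  · intro x hx
    induction hx using Submonoid.closure_induction with
    | mem x hx =>
      rcases hx with rfl | rfl
      exacts [Or.inr hs, Or.inl rfl]
    | one => exact Or.inr (one_mem _)
    | mul x y _ _ hx hy =>
      rcases hx with rfl | hx <;> rcases hy with rfl | hy
      · exact Or.inr htt
      · obtain ⟨_ | n, rfl⟩ := hy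
        · simp
        · refine Or.inr ?_
          simpa only [pow_succ', mul_assoc, SetLike.mem_coe] using mul_mem hts (pow_mem hs n)
      · obtain ⟨_ | n, rfl⟩ := hx
        · simp
        · refine Or.inr ?_
          simpa only [pow_succ, mul_assoc, SetLike.mem_coe] using mul_mem (pow_mem hs n) hst
      · exact Or.inr (mul_mem hx hy)
  · refine Set.insert_subset (Submonoid.subset_closure (Set.mem_insert_of_mem _ rfl)) ?_
    exact Submonoid.powers_le.mpr (Submonoid.subset_closure (Set.mem_insert _ _))

theorem coe_powers_eq_image_Iio {m n : ℕ} (hmn : m < n) (h : s ^ n = s ^ m) :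
    (Submonoid.powers s : Set M) = (s ^ ·) '' Set.Iio n := by
  apply Set.Subset.antisymm
  · rintro _ ⟨k, rfl⟩
    induction k using Nat.strong_induction_on with
    | _ k ih =>
      rcases lt_or_ge k n with hk | hk
      · exact ⟨k, hk, rfl⟩
      · have reduce : s ^ k = s ^ (k - n + m) := by
          rw [pow_add, ← h, ← pow_add, Nat.sub_add_cancel hk]
        simpa only [reduce] using ih (k - n + m) (by omega)
  · rintro _ ⟨k, -, rfl⟩
    exact ⟨k, rfl⟩

end Monoid

section Difference

variable {α G : Type*} [AddCommGroup G] (f : α → G)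

/-- The saturated relation with difference set `D`: it relates all pairs along which the value of
`f` changes by an element of `D`. -/
def diffRel (D : Set G) (x y : α) : Prop := f y - f x ∈ D

/-- The set of changes of the value of `f` under the moves of a relation `r` from `x`. -/
def diffSet (r : α → α → Prop) (x : α) : Set G := (f · - f x) '' {y | r x y}

variable {f} {r s : α → α → Prop} {E : Set G}

theorem comp_diffRel (hr : ∀ x, diffSet f r x = E) (D : Set G) :
    Relation.Comp r (diffRel f D) = diffRel f (E + D) := by
  ext x z
  constructor
  · rintro ⟨y, hxy, hyz⟩
    refine ⟨f y - f x, hr x ▸ ⟨y, hxy, rfl⟩, f z - f y, hyz, ?_⟩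
    simp
  · rintro ⟨e, he, d, hd, hsum⟩
    obtain ⟨y, hxy, rfl⟩ := (hr x).symm ▸ he
    have hyz : f z - f y = d := by
      rw [← sub_sub_sub_cancel_right _ _ (f x), ← hsum, add_sub_cancel_left]
    exact ⟨y, hxy, by rwa [diffRel, hyz]⟩

theorem diffSet_comp (hs : ∀ x, diffSet f s x = E) (x : α) :
    diffSet f (Relation.Comp r s) x = diffSet f r x + E := by
  ext d
  constructor
  · rintro ⟨z, ⟨y, hxy, hyz⟩, rfl⟩
    refine ⟨f y - f x, ⟨y, hxy, rfl⟩, f z - f y, hs y ▸ ⟨z, hyz, rfl⟩, ?_⟩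
    simp
  · rintro ⟨_, ⟨y, hxy, rfl⟩, e, he, rfl⟩
    obtain ⟨z, hyz, rfl⟩ := (hs y).symm ▸ he
    exact ⟨z, ⟨y, hxy, hyz⟩, by simp⟩

end Difference

theorem MRel_mul_eq_comp (r s : MRel) : r * s = Relation.Comp r s := rfl

/-- The set of pitch classes of the notes of a triad. -/
def pitchClasses : Htriads → Finset (ZMod 12)
  | .inl n => {n, n + 4, n + 7}
  | .inr (.inl n) => {n, n + 3, n + 7}
  | .inr (.inr k) => {p | m4 p = k}

/-- The sum of the pitch classes of a triad, which measures total voice leading. -/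
def pitchSum (x : Htriads) : ZMod 12 := ∑ p ∈ pitchClasses x, p

/-- The total changes of pitch that result from `m` moves of a single voice by a semitone. -/
def stepSums (m : ℕ) : Finset (ZMod 12) := m • {1, -1}

theorem stepSums_add (m n : ℕ) : stepSums (m + n) = stepSums m + stepSums n := add_nsmul _ m n

theorem stepSums_injOn : Set.InjOn stepSums (Set.Iio 7) := by
  have : ∀ i < 7, ∀ j < 7, stepSums i = stepSums j → i = j := by decide +kernel
  exact fun i hi j hj => this i hi j hj

/-- Douthett's relation `P_{m,0}` for `m = 1, 2`: `m` voices move by a semitone and the others are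
held. It is encoded by the number of common tones and the total change of pitch. -/
def parsimonious (m : ℕ) : MRel := fun x y =>
  #(pitchClasses x ∩ pitchClasses y) + m = 3 ∧ pitchSum y - pitchSum x ∈ stepSums m

instance (m : ℕ) : DecidableRel (parsimonious m) := fun _ _ =>
  inferInstanceAs (Decidable (_ ∧ _))

theorem Srel_eq_parsimonious_one : Srel = parsimonious 1 := by
  ext x y
  rcases x with a | a | a <;> rcases y with b | b | b <;>
    simp only [Srel, maj, mino, aug, Sum.inl.injEq, Sum.inr.injEq, reduceCtorEq, false_and,
      and_false, exists_false, or_false, false_or] <;>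
    revert a b <;> decide +kernel

theorem Trel_eq_parsimonious_two : Trel = parsimonious 2 := by
  ext x y
  rcases x with a | a | a <;> rcases y with b | b | b <;>
    simp only [Trel, maj, mino, aug, Sum.inl.injEq, Sum.inr.injEq, reduceCtorEq, false_and,
      and_false, exists_false, or_false, false_or] <;>
    revert a b <;> decide +kernel

theorem exists_parsimonious_of_pitchSum_sub_mem :
    ∀ i ∈ Finset.Icc 1 2, ∀ j ∈ Finset.Icc 1 2, ∀ x z : Htriads,
      pitchSum z - pitchSum x ∈ stepSums (i + j) →
        ∃ y, parsimonious i x y ∧ parsimonious j y z := by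
  decide +kernel

theorem parsimonious_mul_eq_diffRel {i j : ℕ} (hi : i ∈ Finset.Icc 1 2) (hj : j ∈ Finset.Icc 1 2) :
    parsimonious i * parsimonious j = diffRel pitchSum (stepSums (i + j)) := by
  ext x z
  constructor
  · rintro ⟨y, ⟨-, hxy⟩, -, hyz⟩
    have hsum := Finset.add_mem_add hxy hyz
    rwa [← stepSums_add, sub_add_sub_cancel'] at hsum
  · exact exists_parsimonious_of_pitchSum_sub_mem i hi j hj x z

theorem diffSet_parsimonious_one (x : Htriads) :
    diffSet pitchSum (parsimonious 1) x = stepSums 1 := by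
  have key : ∀ x d, (∃ y, parsimonious 1 x y ∧ pitchSum y - pitchSum x = d) ↔ d ∈ stepSums 1 := by
    decide +kernel
  exact Set.ext (key x)

theorem diffSet_parsimonious_two_aug_zero :
    diffSet pitchSum (parsimonious 2) (aug 0) = ({2, -2} : Finset (ZMod 12)) := by
  have key : ∀ d, (∃ y, parsimonious 2 (aug 0) y ∧ pitchSum y - pitchSum (aug 0) = d) ↔
      d ∈ ({2, -2} : Finset (ZMod 12)) := by
    decide +kernel
  exact Set.ext key

theorem diffSet_parsimonious_one_pow (k : ℕ) (x : Htriads) :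
    diffSet pitchSum (parsimonious 1 ^ k) x = stepSums k := by
  induction k with
  | zero =>
    have hx : {y | (1 : MRel) x y} = {x} := Set.ext fun y => eq_comm
    simp [diffSet, hx, stepSums, Set.singleton_zero]
  | succ k ih =>
    rw [pow_succ, MRel_mul_eq_comp, diffSet_comp diffSet_parsimonious_one, ih, stepSums_add,
      Finset.coe_add]

theorem parsimonious_one_pow_add_two (k : ℕ) :
    parsimonious 1 ^ (k + 2) = diffRel pitchSum (stepSums (k + 2)) := by
  induction k with
  | zero => rw [zero_add, pow_two, parsimonious_mul_eq_diffRel (by decide) (by decide)]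
  | succ k ih =>
    rw [add_right_comm, pow_succ', ih, MRel_mul_eq_comp, comp_diffRel diffSet_parsimonious_one,
      ← Finset.coe_add, ← stepSums_add, add_comm 1]

theorem parsimonious_mul_mem_powers {i j : ℕ} (hi : i ∈ Finset.Icc 1 2) (hj : j ∈ Finset.Icc 1 2) :
    parsimonious i * parsimonious j ∈ Submonoid.powers (parsimonious 1) := by
  obtain ⟨k, hk⟩ : ∃ k, i + j = k + 2 := ⟨i + j - 2, by grind⟩
  rw [parsimonious_mul_eq_diffRel hi hj, hk, ← parsimonious_one_pow_add_two]
  exact pow_mem (Submonoid.mem_powers _) _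

theorem parsimonious_one_pow_seven : parsimonious 1 ^ 7 = parsimonious 1 ^ 5 := by
  have h : stepSums 7 = stepSums 5 := by decide +kernel
  rw [parsimonious_one_pow_add_two 5, parsimonious_one_pow_add_two 3, h]

theorem parsimonious_one_pow_injOn : Set.InjOn (parsimonious 1 ^ ·) (Set.Iio 7) := by
  refine Set.InjOn.of_comp (g := fun r => diffSet pitchSum r (aug 0)) ?_
  simpa only [Function.comp_def, diffSet_parsimonious_one_pow] using
    Finset.coe_injective.comp_injOn stepSums_injOn

-- The starting triad matters: from a major or minor triad, `P_{2,0}` and `P_{1,0} ^ 2` reach the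
-- same sums.
theorem parsimonious_two_notMem_image_pow :
    parsimonious 2 ∉ (parsimonious 1 ^ ·) '' Set.Iio 7 := by
  rintro ⟨k, hk, h⟩
  have hdiff : stepSums k = {2, -2} := by
    rw [← Finset.coe_inj, ← diffSet_parsimonious_one_pow k (aug 0),
      ← diffSet_parsimonious_two_aug_zero, ← h]
  have hne : ∀ k < 7, stepSums k ≠ {2, -2} := by decide +kernel
  exact hne k hk hdiff

theorem coe_closure_parsimonious :
    (Submonoid.closure {parsimonious 1, parsimonious 2} : Set MRel) =
      insert (parsimonious 2) ((parsimonious 1 ^ ·) '' Set.Iio 7) := by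
  rw [coe_closure_pair_eq_insert_powers (parsimonious_mul_mem_powers (by decide) (by decide))
      (parsimonious_mul_mem_powers (by decide) (by decide))
      (parsimonious_mul_mem_powers (by decide) (by decide)),
    coe_powers_eq_image_Iio (by norm_num) parsimonious_one_pow_seven]

/-- the submonoid of relations on `Htriads` generated by `{S, T}`
contains exactly 8 elements. -/
theorem stmt16 : Nat.card (Submonoid.closure ({Srel, Trel} : Set MRel)) = 8 := by
  rw [Srel_eq_parsimonious_one, Trel_eq_parsimonious_two, ← SetLike.coe_sort_coe,
    coe_closure_parsimonious, Nat.card_coe_set_eq,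
    Set.ncard_insert_of_notMem parsimonious_two_notMem_image_pow,
    parsimonious_one_pow_injOn.ncard_image]
  simp [Set.ncard_eq_toFinset_card']
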